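/- If α ∈ ℝ is an accumulation point of S from below, i.e., for every ε > 0 there exists s ∈ S with α - ε < s < α, then α is a rational number. -/

import Mathlib

/-!
The number `-K²` is the maximum of `x ↦ 2 c · x + x · M x`, which is the functional (twice the
injected minus the dissipated power) of a network of resistors on the dual graph, with sources `c`
and leaks to the ground given by the row sums of `-M`.

A vertex without source and leak at which exactly two wires meet can be eliminated without changing
the supremum, because resistances in series add up. These are the rational `(-2)`-curves in chains.
The size of what remains is bounded linearly by `-K²`: testing the functional on `c i / (-M i i)`
bounds `∑ c`, connectedness then bounds the total leak, and testing the form `-M` on `2 - χ`, where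
`χ` is the indicator of the set of rational `(-2)`-curves with at most one neighbor, bounds the
number of these curves.

Hence a convergent sequence of values of `-K²` comes from networks of bounded size, in which only
the lengths of the wires are unbounded. Along a subsequence these lengths increase, so that the
functionals increase to a quadratic functional with rational coefficients, with conductance `0` for
the wires that become infinitely long. The supremum of an increasing limit is the limit of the
suprema, and a supremum of a rational quadratic functional is attained at a rational point.
-/

open Matrix

structure ResolutionDatum (r : ℕ) where
  M : Matrix (Fin r) (Fin r) ℤ
  p : Fin r → ℕ
  symm : M.IsSymm
  negdef : ∀ x : Fin r → ℝ, x ≠ 0 → x ⬝ᵥ ((M.map (Int.cast : ℤ → ℝ)) *ᵥ x) < 0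
  offdiag_nonneg : ∀ i j : Fin r, i ≠ j → 0 ≤ M i j
  diag_le_neg_two : ∀ i : Fin r, p i = 0 → M i i ≤ -2
  connected : (SimpleGraph.fromRel (fun i j : Fin r => 0 < M i j)).Connected

/-- The vector `c i = 2 p i - 2 - M i i` (the values `K · A_i`). -/
def ResolutionDatum.c {r : ℕ} (D : ResolutionDatum r) : Fin r → ℚ :=
  fun i => 2 * (D.p i : ℚ) - 2 - (D.M i i : ℚ)

/-- `-K² = -cᵀ M⁻¹ c`. -/
noncomputable def ResolutionDatum.negK2 {r : ℕ} (D : ResolutionDatum r) : ℚ :=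
  - (D.c ⬝ᵥ ((D.M.map (Int.cast : ℤ → ℚ))⁻¹ *ᵥ D.c))

/-- The set of all values `-K²` of normal surface singularities. -/
def negK2Set : Set ℝ :=
  { x : ℝ | ∃ (r : ℕ) (_ : 0 < r) (D : ResolutionDatum r), x = (D.negK2 : ℝ) }

open Filter Set Topology

section QuadraticFunctional

variable {V : Type*} [Fintype V]

lemma map_mulVec_comp {R R' : Type*} [NonAssocSemiring R] [NonAssocSemiring R'] (f : R →+* R')
    (A : Matrix V V R) (x : V → R) : A.map f *ᵥ (f ∘ x) = f ∘ (A *ᵥ x) :=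
  funext fun i => (RingHom.map_mulVec f A x i).symm

/-- The functional `x ↦ 2 b · x - x · S x`, whose maximum is `b · S⁻¹ b` when `S` is symmetric and
positive definite. -/
def quadraticFunctional {R : Type*} [CommRing R] (S : Matrix V V R) (b x : V → R) : R :=
  2 * (b ⬝ᵥ x) - x ⬝ᵥ (S *ᵥ x)

lemma quadraticFunctional_add {R : Type*} [CommRing R] (S T : Matrix V V R) (b c : V → R) :
    quadraticFunctional (S + T) (b + c) = quadraticFunctional S b + quadraticFunctional T c := by
  ext x
  simp only [quadraticFunctional, Pi.add_apply, add_mulVec, add_dotProduct, dotProduct_add]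
  ring

lemma quadraticFunctional_eq_sub {R : Type*} [CommRing R] {S : Matrix V V R} (hS : S.IsSymm)
    {b z : V → R} (hz : S *ᵥ z = b) (x : V → R) :
    quadraticFunctional S b x = b ⬝ᵥ z - (x - z) ⬝ᵥ (S *ᵥ (x - z)) := by
  have hcross : z ⬝ᵥ (S *ᵥ x) = b ⬝ᵥ x := by
    rw [dotProduct_mulVec, ← mulVec_transpose, hS.eq, hz]
  rw [quadraticFunctional, mulVec_sub, dotProduct_sub, sub_dotProduct, sub_dotProduct, hcross, hz,
    dotProduct_comm x b, dotProduct_comm z b]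
  ring

lemma isGreatest_range_quadraticFunctional {R : Type*} [CommRing R] [PartialOrder R]
    [IsOrderedRing R] {S : Matrix V V R} (hS : S.IsSymm) (hpos : ∀ x, 0 ≤ x ⬝ᵥ (S *ᵥ x))
    {b z : V → R} (hz : S *ᵥ z = b) :
    IsGreatest (range (quadraticFunctional S b)) (b ⬝ᵥ z) := by
  refine ⟨⟨z, ?_⟩, ?_⟩
  · simp [quadraticFunctional_eq_sub hS hz]
  · rintro _ ⟨x, rfl⟩
    rw [quadraticFunctional_eq_sub hS hz]
    exact sub_le_self _ (hpos _)

lemma sq_dotProduct_le_of_mem_upperBounds {K : Type*} [Field K] [LinearOrder K]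
    [IsStrictOrderedRing K] {S : Matrix V V K} {b : V → K} {a : K}
    (ha : a ∈ upperBounds (range (quadraticFunctional S b))) (x : V → K) :
    (b ⬝ᵥ x) ^ 2 ≤ a * (x ⬝ᵥ (S *ᵥ x)) := by
  have hdiscrim : discrim (x ⬝ᵥ (S *ᵥ x)) (-2 * (b ⬝ᵥ x)) a ≤ 0 := by
    refine discrim_le_zero fun t => ?_
    have h := ha (mem_range_self (t • x))
    simp only [quadraticFunctional, mulVec_smul, dotProduct_smul, smul_dotProduct,
      smul_eq_mul] at h
    linarith
  rw [discrim] at hdiscrim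
  linarith

lemma exists_mulVec_eq_of_forall_dotProduct_eq_zero {k : Type*} [Field k] {S : Matrix V V k}
    (hS : S.IsSymm) {b : V → k} (hb : ∀ y, S *ᵥ y = 0 → b ⬝ᵥ y = 0) : ∃ z, S *ᵥ z = b := by
  classical
  by_contra! hne
  have hmem : b ∉ LinearMap.range S.mulVecLin := fun ⟨z, hz⟩ => hne z hz
  obtain ⟨f, hfb, hf⟩ := Submodule.exists_le_ker_of_notMem hmem
  obtain ⟨y, rfl⟩ := (dotProductEquiv k V).surjective f
  have hSy : S *ᵥ y = 0 := dotProduct_eq_zero _ fun v => by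
    rw [← hS.eq, mulVec_transpose, ← dotProduct_mulVec]
    exact hf ⟨v, rfl⟩
  exact hfb ((dotProduct_comm y b).trans (hb y hSy))

lemma mem_range_algebraMap_of_isLUB {k K : Type*} [Field k] [Field K] [LinearOrder K]
    [IsStrictOrderedRing K] [Algebra k K] {S : Matrix V V k} (hS : S.IsSymm) {b : V → k} {a : K}
    (ha : IsLUB (range (quadraticFunctional (S.map (algebraMap k K)) (algebraMap k K ∘ b))) a) :
    a ∈ range (algebraMap k K) := by
  obtain ⟨z, hz⟩ : ∃ z, S *ᵥ z = b := by
    refine exists_mulVec_eq_of_forall_dotProduct_eq_zero hS fun y hy => ?_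
    have hsq := sq_dotProduct_le_of_mem_upperBounds ha.1 (algebraMap k K ∘ y)
    rw [map_mulVec_comp, hy, ← RingHom.map_dotProduct, ← RingHom.map_dotProduct, dotProduct_zero,
      map_zero, mul_zero] at hsq
    exact (map_eq_zero _).1 (pow_eq_zero_iff two_ne_zero |>.1 (hsq.antisymm (sq_nonneg _)))
  -- A positive upper bound is needed in order to divide.
  have hbound : max a 1 ∈ upperBounds
      (range (quadraticFunctional (S.map (algebraMap k K)) (algebraMap k K ∘ b))) :=
    upperBounds_mono_mem (le_max_left a 1) ha.1
  have hpos (x : V → K) : 0 ≤ x ⬝ᵥ (S.map (algebraMap k K) *ᵥ x) :=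
    nonneg_of_mul_nonneg_right
      ((sq_nonneg _).trans (sq_dotProduct_le_of_mem_upperBounds hbound x))
      (zero_lt_one.trans_le (le_max_right a 1))
  have hmax := isGreatest_range_quadraticFunctional (hS.map _) hpos
    (by rw [map_mulVec_comp, hz])
  exact ⟨b ⬝ᵥ z, (RingHom.map_dotProduct _ b z).trans (hmax.isLUB.unique ha)⟩

/-- The quadratic functionals on `V → ℝ` without constant term and with rational coefficients. -/
def rationalQuadraticFunctionals (V : Type*) [Fintype V] : AddSubmonoid ((V → ℝ) → ℝ) where
  carrier := {F | ∃ (S : Matrix V V ℚ) (b : V → ℚ), S.IsSymm ∧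
    F = quadraticFunctional (S.map (algebraMap ℚ ℝ)) (algebraMap ℚ ℝ ∘ b)}
  zero_mem' := ⟨0, 0, isSymm_zero, by ext; simp [quadraticFunctional, dotProduct]⟩
  add_mem' := by
    rintro _ _ ⟨S, b, hS, rfl⟩ ⟨T, c, hT, rfl⟩
    refine ⟨S + T, b + c, hS.add hT, ?_⟩
    rw [← quadraticFunctional_add, Matrix.map_add _ (map_add _)]
    congr
    ext
    simp

lemma exists_rat_of_isLUB_range {F : (V → ℝ) → ℝ} (hF : F ∈ rationalQuadraticFunctionals V)
    {a : ℝ} (ha : IsLUB (range F) a) : ∃ q : ℚ, a = q := by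
  obtain ⟨S, b, hS, rfl⟩ := hF
  obtain ⟨q, hq⟩ := mem_range_algebraMap_of_isLUB hS ha
  exact ⟨q, hq.symm⟩

end QuadraticFunctional

section MonotoneLimits

variable {E E' : Type*} [Preorder E] [TopologicalSpace E] [Preorder E'] [TopologicalSpace E']

/-- Every sequence in `A` has a monotone subsequence that converges to a point of `R`. -/
def HasMonotoneLimitsIn (A R : Set E) : Prop :=
  ∀ u : ℕ → E, (∀ m, u m ∈ A) →
    ∃ g : ℕ → ℕ, StrictMono g ∧ Monotone (u ∘ g) ∧ ∃ a ∈ R, Tendsto (u ∘ g) atTop (𝓝 a)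

namespace HasMonotoneLimitsIn

lemma mono {A B R : Set E} (hB : HasMonotoneLimitsIn B R) (hAB : A ⊆ B) :
    HasMonotoneLimitsIn A R :=
  fun u hu => hB u fun m => hAB (hu m)

lemma singleton {a : E} {R : Set E} (ha : a ∈ R) : HasMonotoneLimitsIn {a} R := fun u hu => by
  obtain rfl : u = fun _ => a := funext hu
  exact ⟨id, strictMono_id, monotone_const, a, ha, tendsto_const_nhds⟩

lemma image {A R : Set E} {R' : Set E'} (hA : HasMonotoneLimitsIn A R) {f : E → E'}
    (hmono : Monotone f) (hcont : Continuous f) (hf : MapsTo f R R') :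
    HasMonotoneLimitsIn (f '' A) R' := fun u hu => by
  choose v hvA hv using hu
  obtain rfl : f ∘ v = u := funext hv
  obtain ⟨g, hg, hvg, a, ha, hlim⟩ := hA v hvA
  exact ⟨g, hg, hmono.comp hvg, f a, hf ha, (hcont.tendsto a).comp hlim⟩

lemma iUnion {ι : Type*} [Finite ι] {A : ι → Set E} {R : Set E}
    (hA : ∀ i, HasMonotoneLimitsIn (A i) R) : HasMonotoneLimitsIn (⋃ i, A i) R := fun u hu => by
  choose i hi using fun m => mem_iUnion.1 (hu m)
  obtain ⟨j, hj⟩ := Finite.exists_infinite_fiber i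
  obtain ⟨f, hf, hfj : ∀ m, i (f m) = j⟩ := extraction_of_frequently_atTop
    (Nat.frequently_atTop_iff_infinite.2 (infinite_coe_iff.1 hj))
  obtain ⟨g, hg, hmono, hlim⟩ := hA j (u ∘ f) fun m => hfj m ▸ hi (f m)
  exact ⟨f ∘ g, hf.comp hg, hmono, hlim⟩

section Add

open scoped Pointwise

variable [AddCommMonoid E] [AddLeftMono E] [ContinuousAdd E]

lemma add {A B : Set E} {R : AddSubmonoid E} (hA : HasMonotoneLimitsIn A R)
    (hB : HasMonotoneLimitsIn B R) : HasMonotoneLimitsIn (A + B) R := fun u hu => by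
  choose v hv w hw hvw using hu
  obtain rfl : v + w = u := funext hvw
  obtain ⟨f, hf, hvf, a, ha, hva⟩ := hA v hv
  obtain ⟨g, hg, hwg, b, hb, hwb⟩ := hB (w ∘ f) fun m => hw (f m)
  refine ⟨f ∘ g, hf.comp hg, ?_, a + b, R.add_mem ha hb, ?_⟩
  · exact (hvf.comp hg.monotone).add hwg
  · exact (hva.comp hg.tendsto_atTop).add hwb

lemma nsmul {A : Set E} {R : AddSubmonoid E} (hA : HasMonotoneLimitsIn A R) (n : ℕ) :
    HasMonotoneLimitsIn (n • A) R := by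
  induction n with
  | zero =>
    rw [zero_nsmul]
    exact singleton R.zero_mem
  | succ n ih => simpa only [succ_nsmul] using ih.add hA

end Add

end HasMonotoneLimitsIn

lemma hasMonotoneLimitsIn_neg_inv_pnat :
    HasMonotoneLimitsIn (range fun ℓ : ℕ+ => -((ℓ : ℕ) : ℝ)⁻¹) (range ((↑) : ℚ → ℝ)) := by
  intro u hu
  choose ℓ hℓ using hu
  obtain rfl : (fun m => -((ℓ m : ℕ) : ℝ)⁻¹) = u := funext hℓ
  obtain ⟨g, hg⟩ := (wellQuasiOrdered_le (α := ℕ)).exists_monotone_subseq fun m => (ℓ m : ℕ)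
  have hmono : Monotone fun m => (ℓ (g m) : ℕ) := hg
  refine ⟨g, g.strictMono, fun m m' hm => ?_, ?_⟩
  · exact neg_le_neg (inv_anti₀ (by simp) (by exact_mod_cast hmono hm))
  rcases tendsto_atTop_of_monotone hmono with htop | ⟨l, hl⟩
  · refine ⟨0, ⟨0, Rat.cast_zero⟩, ?_⟩
    rw [← neg_zero]
    exact (tendsto_inv_atTop_zero.comp (tendsto_natCast_atTop_atTop.comp htop)).neg
  · refine ⟨-(l : ℝ)⁻¹, ⟨-(l : ℚ)⁻¹, by simp⟩, ?_⟩
    have hcont : Continuous fun n : ℕ => -(n : ℝ)⁻¹ := continuous_of_discreteTopology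
    exact (hcont.tendsto l).comp hl

lemma isLUB_range_of_tendsto {ι X Y : Type*} [Preorder ι] [Nonempty ι] [IsDirectedOrder ι]
    [Preorder Y] [TopologicalSpace Y] [OrderClosedTopology Y] {F : ι → X → Y} (hF : Monotone F)
    {G : X → Y} (hG : Tendsto F atTop (𝓝 G)) {s : ι → Y} (hs : ∀ i, IsLUB (range (F i)) (s i))
    {a : Y} (ha : Tendsto s atTop (𝓝 a)) :
    IsLUB (range G) a := by
  have hGx (x : X) : Tendsto (fun i => F i x) atTop (𝓝 (G x)) := tendsto_pi_nhds.1 hG x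
  constructor
  · rintro _ ⟨x, rfl⟩
    exact le_of_tendsto_of_tendsto' (hGx x) ha fun i => (hs i).1 ⟨x, rfl⟩
  · intro t ht
    refine le_of_tendsto' ha fun i => (hs i).2 ?_
    rintro _ ⟨x, rfl⟩
    exact (Monotone.ge_of_tendsto (fun _ _ hij => hF hij x) (hGx x) i).trans (ht ⟨x, rfl⟩)

end MonotoneLimits

lemma sq_sub_div_add_sq_sub_div {K : Type*} [Field K] {p q : K} (hp : p ≠ 0) (hq : q ≠ 0)
    (hpq : p + q ≠ 0) (a b t : K) :
    (t - a) ^ 2 / p + (t - b) ^ 2 / q =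
      (a - b) ^ 2 / (p + q) + ((t - a) * q + (t - b) * p) ^ 2 / (p * q * (p + q)) := by
  field_simp
  ring

lemma isLeast_range_sq_sub_div_add_sq_sub_div {K : Type*} [Field K] [LinearOrder K]
    [IsStrictOrderedRing K] {p q : K} (hp : 0 < p) (hq : 0 < q) (a b : K) :
    IsLeast (range fun t => (t - a) ^ 2 / p + (t - b) ^ 2 / q) ((a - b) ^ 2 / (p + q)) := by
  have hpq : 0 < p + q := add_pos hp hq
  simp only [sq_sub_div_add_sq_sub_div hp.ne' hq.ne' hpq.ne']
  refine ⟨⟨(a * q + b * p) / (p + q), ?_⟩, ?_⟩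
  · field_simp
    ring
  · rintro _ ⟨t, rfl⟩
    exact le_add_of_nonneg_right (by positivity)

section Energy

variable {V W : Type*}

/-- The square of the potential drop of `x` between two unordered vertices. -/
def sqDrop (x : V → ℝ) : Sym2 V → ℝ :=
  Sym2.lift ⟨fun a b => (x a - x b) ^ 2, fun a b => sub_sq_comm (x a) (x b)⟩

lemma sqDrop_mk (x : V → ℝ) (a b : V) : sqDrop x s(a, b) = (x a - x b) ^ 2 := rfl

lemma sqDrop_nonneg (x : V → ℝ) (z : Sym2 V) : 0 ≤ sqDrop x z := by
  induction z
  exact sq_nonneg _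

lemma sqDrop_comp (φ : V → W) (y : W → ℝ) (z : Sym2 V) :
    sqDrop (y ∘ φ) z = sqDrop y (z.map φ) := by
  induction z
  rfl

lemma sqDrop_congr {x y : V → ℝ} {z : Sym2 V} (h : ∀ v ∈ z, x v = y v) :
    sqDrop x z = sqDrop y z := by
  induction z with
  | h a b => rw [sqDrop_mk, sqDrop_mk, h a (Sym2.mem_mk_left a b), h b (Sym2.mem_mk_right a b)]

/-- The energy `∑ (x a - x b)² / ℓ` dissipated by the potential `x` in the resistors `(s(a, b), ℓ)`
of `L`, where the resistance `ℓ` of an edge is its length. -/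
noncomputable def energy (L : Multiset (Sym2 V × ℕ+)) (x : V → ℝ) : ℝ :=
  (L.map fun e => sqDrop x e.1 / (e.2 : ℕ)).sum

/-- The multiset of all ends of the edges in `L`; the multiplicity of a vertex is its degree, to
which a loop contributes two. -/
def edgeEnds (L : Multiset (Sym2 V × ℕ+)) : Multiset V :=
  L.bind fun e => e.1.toMultiset

lemma energy_cons (e : Sym2 V × ℕ+) (L : Multiset (Sym2 V × ℕ+)) (x : V → ℝ) :
    energy (e ::ₘ L) x = sqDrop x e.1 / (e.2 : ℕ) + energy L x := by
  simp [energy]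

lemma energy_congr {L : Multiset (Sym2 V × ℕ+)} {x y : V → ℝ}
    (h : ∀ v ∈ edgeEnds L, x v = y v) : energy L x = energy L y := by
  unfold energy
  congr 1
  refine Multiset.map_congr rfl fun e he => ?_
  rw [sqDrop_congr fun v hv => h v (Multiset.mem_bind.2 ⟨e, he, Sym2.mem_toMultiset.2 hv⟩)]

lemma toMultiset_mk (a b : V) : s(a, b).toMultiset = {a, b} := rfl

lemma edgeEnds_cons (a b : V) (ℓ : ℕ+) (L : Multiset (Sym2 V × ℕ+)) :
    edgeEnds ((s(a, b), ℓ) ::ₘ L) = a ::ₘ b ::ₘ edgeEnds L := by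
  rw [edgeEnds, Multiset.cons_bind, toMultiset_mk, Multiset.insert_eq_cons, Multiset.cons_add,
    Multiset.singleton_add, edgeEnds]

lemma card_edgeEnds (L : Multiset (Sym2 V × ℕ+)) :
    Multiset.card (edgeEnds L) = 2 * Multiset.card L := by
  simp [edgeEnds, Multiset.card_bind, Sym2.card_toMultiset, mul_comm]

lemma exists_cons_of_mem_edgeEnds {L : Multiset (Sym2 V × ℕ+)} {v : V} (hv : v ∈ edgeEnds L) :
    ∃ a ℓ L', L = (s(v, a), ℓ) ::ₘ L' := by
  obtain ⟨⟨z, ℓ⟩, he, hz⟩ := Multiset.mem_bind.1 hv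
  obtain ⟨a, rfl⟩ := Sym2.mem_toMultiset.1 hz
  obtain ⟨L', rfl⟩ := Multiset.exists_cons_of_mem he
  exact ⟨a, ℓ, L', rfl⟩

variable [DecidableEq V]

lemma energy_update_of_notMem {L : Multiset (Sym2 V × ℕ+)} {v : V} (hv : v ∉ edgeEnds L)
    (x : V → ℝ) (t : ℝ) : energy L (Function.update x v t) = energy L x :=
  energy_congr fun w hw => Function.update_of_ne (by rintro rfl; exact hv hw) _ _

lemma isLeast_range_energy_cons_cons {a b v : V} (hav : a ≠ v) (hbv : b ≠ v) (p q : ℕ+)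
    {L : Multiset (Sym2 V × ℕ+)} (hL : v ∉ edgeEnds L) (x : V → ℝ) :
    IsLeast (range fun t => energy ((s(v, a), p) ::ₘ (s(v, b), q) ::ₘ L) (Function.update x v t))
      (energy ((s(a, b), p + q) ::ₘ L) x) := by
  have henergy (t : ℝ) : energy ((s(v, a), p) ::ₘ (s(v, b), q) ::ₘ L) (Function.update x v t) =
      (t - x a) ^ 2 / (p : ℕ) + (t - x b) ^ 2 / (q : ℕ) + energy L x := by
    simp [energy_cons, sqDrop_mk, energy_update_of_notMem hL, hav, hbv, add_assoc]
  have hmin := isLeast_range_sq_sub_div_add_sq_sub_div (p := ((p : ℕ) : ℝ)) (q := ((q : ℕ) : ℝ))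
    (by simp) (by simp) (x a) (x b)
  simp only [henergy, energy_cons, sqDrop_mk, PNat.add_coe, Nat.cast_add]
  refine ⟨?_, ?_⟩
  · obtain ⟨t, ht⟩ := hmin.1
    exact ⟨t, by simp only [← ht]⟩
  · rintro _ ⟨t, rfl⟩
    exact add_le_add_left (hmin.2 ⟨t, rfl⟩) _

/-- Either `v` carries a single loop, in which no energy is dissipated, or it joins two edges in
series. -/
lemma exists_series_reduction {L : Multiset (Sym2 V × ℕ+)} {v : V}
    (hv : (edgeEnds L).count v = 2) :
    ∃ L', Multiset.card L' < Multiset.card L ∧ edgeEnds L' = (edgeEnds L).filter (· ≠ v) ∧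
      ∀ x, IsLeast (range fun t => energy L (Function.update x v t)) (energy L' x) := by
  obtain ⟨a, p, L₁, rfl⟩ := exists_cons_of_mem_edgeEnds (Multiset.count_pos.1 (hv ▸ two_pos))
  rw [edgeEnds_cons] at hv
  obtain rfl | hav := eq_or_ne a v
  · have hL₁ : a ∉ edgeEnds L₁ := by simpa using hv
    refine ⟨L₁, by simp, ?_, fun x => ?_⟩
    · rw [edgeEnds_cons, Multiset.filter_cons_of_neg _ (by simp),
        Multiset.filter_cons_of_neg _ (by simp),
        Multiset.filter_eq_self.2 fun w hw => ne_of_mem_of_not_mem hw hL₁]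
    · simp [energy_cons, sqDrop_mk, energy_update_of_notMem hL₁]
  · have hv₁ : (edgeEnds L₁).count v = 1 := by simpa [hav.symm] using hv
    obtain ⟨b, q, L₂, rfl⟩ := exists_cons_of_mem_edgeEnds (Multiset.count_pos.1 (hv₁ ▸ one_pos))
    rw [edgeEnds_cons] at hv₁
    have hbv : b ≠ v := by rintro rfl; simp at hv₁
    have hL₂ : v ∉ edgeEnds L₂ := by simpa [hbv.symm] using hv₁
    refine ⟨(s(a, b), p + q) ::ₘ L₂, by simp, ?_,
      isLeast_range_energy_cons_cons hav hbv p q hL₂⟩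
    rw [edgeEnds_cons, edgeEnds_cons, edgeEnds_cons,
      Multiset.filter_cons_of_neg _ (by simp), Multiset.filter_cons_of_pos (p := (· ≠ v)) _ hav,
      Multiset.filter_cons_of_neg _ (by simp), Multiset.filter_cons_of_pos (p := (· ≠ v)) _ hbv,
      Multiset.filter_eq_self.2 fun w hw => ne_of_mem_of_not_mem hw hL₂]

end Energy

/-- A network on the vertex set `V`: an edge `(s(a, b), ℓ)` is a wire of resistance `ℓ`, the current
`source v` is injected at `v`, and `v` is connected to the ground with conductance `leak v`. -/
structure ResistorNetwork (V : Type*) where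
  source : V → ℤ
  leak : V → ℤ
  edges : Multiset (Sym2 V × ℕ+)

namespace ResistorNetwork

section Functional

variable {V : Type*} [Fintype V]

/-- Twice the power supplied by the sources minus the power dissipated at the potential `x`. -/
noncomputable def functional (N : ResistorNetwork V) (x : V → ℝ) : ℝ :=
  ∑ v, (2 * N.source v * x v - N.leak v * x v ^ 2) - energy N.edges x

variable [DecidableEq V]

/-- The absolute strengths of the source and the leak at `v` plus the degree of `v`. -/
def weight (N : ResistorNetwork V) (v : V) : ℕ :=
  (N.source v).natAbs + (N.leak v).natAbs + (edgeEnds N.edges).count v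

/-- The total absolute strength of the sources and leaks plus the sum of all degrees. -/
def size (N : ResistorNetwork V) : ℕ := ∑ v, N.weight v

lemma size_eq (N : ResistorNetwork V) :
    N.size = ∑ v, (N.source v).natAbs + ∑ v, (N.leak v).natAbs + 2 * Multiset.card N.edges := by
  simp only [size, weight, Finset.sum_add_distrib]
  rw [Multiset.sum_count_eq_card fun _ _ => Finset.mem_univ _, card_edgeEnds]

lemma functional_congr (N : ResistorNetwork V) {x y : V → ℝ}
    (h : ∀ v, N.weight v ≠ 0 → x v = y v) : N.functional x = N.functional y := by
  unfold functional
  congr 1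
  · refine Finset.sum_congr rfl fun v _ => ?_
    by_cases hv : N.weight v = 0
    · obtain ⟨⟨hsource, hleak⟩, -⟩ : (N.source v = 0 ∧ N.leak v = 0) ∧ _ := by
        simpa [weight] using hv
      simp [hsource, hleak]
    · rw [h v hv]
  · refine energy_congr fun v hv => h v ?_
    have hcount := Multiset.count_pos.2 hv
    unfold weight
    lia

end Functional

section SeriesReduction

variable {V : Type*} [Fintype V] [DecidableEq V]

/-- A vertex without source and leak at which two wires meet. -/
def IsSeriesVertex (N : ResistorNetwork V) (v : V) : Prop :=
  N.source v = 0 ∧ N.leak v = 0 ∧ (edgeEnds N.edges).count v = 2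

instance (N : ResistorNetwork V) : DecidablePred N.IsSeriesVertex := fun v =>
  inferInstanceAs (Decidable (N.source v = 0 ∧ N.leak v = 0 ∧ (edgeEnds N.edges).count v = 2))

/-- The size of what is left of the network after all its series vertices have been eliminated. -/
def coreSize (N : ResistorNetwork V) : ℕ := ∑ v with ¬ N.IsSeriesVertex v, N.weight v

lemma coreSize_eq_of_edgeEnds_eq_filter_ne {N N' : ResistorNetwork V} {v : V}
    (hv : N.IsSeriesVertex v) (hsource : N'.source = N.source) (hleak : N'.leak = N.leak)
    (hends : edgeEnds N'.edges = (edgeEnds N.edges).filter (· ≠ v)) :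
    N'.coreSize = N.coreSize := by
  simp only [coreSize, Finset.sum_filter]
  refine Finset.sum_congr rfl fun w _ => ?_
  obtain rfl | hw := eq_or_ne w v
  · obtain ⟨hsource', hleak', hdegree⟩ := hv
    simp [IsSeriesVertex, weight, hends, hsource, hleak, hsource', hleak', hdegree]
  · simp [IsSeriesVertex, weight, hends, hsource, hleak, hw]

lemma functional_update {N : ResistorNetwork V} {v : V} (hsource : N.source v = 0)
    (hleak : N.leak v = 0) (x : V → ℝ) (t : ℝ) :
    N.functional (Function.update x v t) =
      ∑ w, (2 * N.source w * x w - N.leak w * x w ^ 2) -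
        energy N.edges (Function.update x v t) := by
  unfold functional
  congr 1
  refine Finset.sum_congr rfl fun w _ => ?_
  obtain rfl | hw := eq_or_ne w v
  · simp [hsource, hleak]
  · rw [Function.update_of_ne hw]

lemma exists_eliminate {N : ResistorNetwork V} {v : V} (hv : N.IsSeriesVertex v) :
    ∃ N' : ResistorNetwork V, Multiset.card N'.edges < Multiset.card N.edges ∧
      N'.coreSize = N.coreSize ∧
      upperBounds (range N'.functional) = upperBounds (range N.functional) := by
  obtain ⟨hsource, hleak, hdegree⟩ := hv
  obtain ⟨L, hcard, hends, henergy⟩ := exists_series_reduction hdegree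
  let N' : ResistorNetwork V := { N with edges := L }
  have hmax (x : V → ℝ) :
      IsGreatest (range fun t => N.functional (Function.update x v t)) (N'.functional x) := by
    simp only [functional_update hsource hleak]
    refine ⟨?_, ?_⟩
    · obtain ⟨t, ht⟩ := (henergy x).1
      exact ⟨t, congrArg _ ht⟩
    · rintro _ ⟨t, rfl⟩
      exact sub_le_sub_left ((henergy x).2 ⟨t, rfl⟩) _
  refine ⟨N', hcard, coreSize_eq_of_edgeEnds_eq_filter_ne ⟨hsource, hleak, hdegree⟩ rfl rfl hends,
    subset_antisymm ?_ (upperBounds_mono_set ?_)⟩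
  · rintro a ha _ ⟨x, rfl⟩
    exact ((hmax x).2 ⟨x v, by simp⟩).trans (ha ⟨x, rfl⟩)
  · rintro _ ⟨x, rfl⟩
    obtain ⟨t, ht⟩ := (hmax x).1
    exact ⟨_, ht⟩

lemma exists_size_eq_coreSize (N : ResistorNetwork V) :
    ∃ N' : ResistorNetwork V, N'.size = N.coreSize ∧
      upperBounds (range N'.functional) = upperBounds (range N.functional) := by
  induction hk : Multiset.card N.edges using Nat.strong_induction_on generalizing N with
  | h k ih =>
    by_cases hN : ∃ v, N.IsSeriesVertex v
    · obtain ⟨v, hv⟩ := hN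
      obtain ⟨N₁, hcard, hcore, hbounds⟩ := exists_eliminate hv
      obtain ⟨N₂, hsize, hbounds₂⟩ := ih _ (hk ▸ hcard) N₁ rfl
      exact ⟨N₂, hsize.trans hcore, hbounds₂.trans hbounds⟩
    · refine ⟨N, ?_, rfl⟩
      rw [coreSize, Finset.filter_true_of_mem fun v _ => not_exists.1 hN v, size]

end SeriesReduction

section Map

variable {V W : Type*} [Fintype V] [DecidableEq W]

/-- The network obtained by moving every vertex `v` to `φ v`, which identifies the vertices in a
common fiber of `φ`. -/
def map (φ : V → W) (N : ResistorNetwork V) : ResistorNetwork W where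
  source w := ∑ v with φ v = w, N.source v
  leak w := ∑ v with φ v = w, N.leak v
  edges := N.edges.map (Prod.map (Sym2.map φ) id)

variable [Fintype W]

lemma functional_map (φ : V → W) (N : ResistorNetwork V) (y : W → ℝ) :
    (N.map φ).functional y = N.functional (y ∘ φ) := by
  have henergy : energy (N.map φ).edges y = energy N.edges (y ∘ φ) := by
    simp [energy, map, sqDrop_comp]
  rw [functional, functional, henergy, ← Finset.sum_fiberwise _ φ]
  congr 1
  refine Finset.sum_congr rfl fun w _ => ?_
  simp only [map, Int.cast_sum, Finset.mul_sum, Finset.sum_mul, ← Finset.sum_sub_distrib]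
  refine Finset.sum_congr rfl fun v hv => ?_
  rw [Function.comp_apply, (Finset.mem_filter.1 hv).2]

variable [DecidableEq V]

lemma size_map_le (φ : V → W) (N : ResistorNetwork V) : (N.map φ).size ≤ N.size := by
  have hsum (f : V → ℤ) : ∑ w, (∑ v with φ v = w, f v).natAbs ≤ ∑ v, (f v).natAbs :=
    calc _ ≤ ∑ w, ∑ v with φ v = w, (f v).natAbs :=
          Finset.sum_le_sum fun w _ => Int.natAbs_sum_le _ f
      _ = ∑ v, (f v).natAbs := Finset.sum_fiberwise _ φ _
  rw [size_eq, size_eq, map, Multiset.card_map]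
  exact add_le_add_left (add_le_add (hsum _) (hsum _)) _

lemma exists_of_size_le_card [Nonempty W] {N : ResistorNetwork V} (hN : N.size ≤ Fintype.card W) :
    ∃ N' : ResistorNetwork W, N'.size ≤ N.size ∧ range N'.functional = range N.functional := by
  let s : Finset V := {v | N.weight v ≠ 0}
  have hcard : s.card ≤ Fintype.card W := by
    refine le_trans ?_ hN
    rw [Finset.card_eq_sum_ones, Finset.sum_filter]
    refine Finset.sum_le_sum fun v _ => ?_
    split_ifs <;> lia
  obtain ⟨φ, -, hφ⟩ := s.finite_toSet.exists_injOn_of_encard_le (t := (univ : Set W))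
    (by simpa using hcard)
  refine ⟨N.map φ, size_map_le φ N, subset_antisymm ?_ ?_⟩
  · rintro _ ⟨y, rfl⟩
    exact ⟨y ∘ φ, (functional_map φ N y).symm⟩
  · rintro _ ⟨x, rfl⟩
    refine ⟨Function.extend (domRestrict s φ) (domRestrict s x) 0, ?_⟩
    rw [functional_map]
    exact N.functional_congr fun v hv =>
      (injOn_iff_injective.1 hφ).extend_apply _ _ ⟨v, by simpa [s] using hv⟩

end Map

end ResistorNetwork

section LimitsOfFunctionals

variable {V : Type*} [Fintype V]

lemma neg_mul_sq_dotProduct_mem_rationalQuadraticFunctionals (q : ℚ) (v : V → ℚ) :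
    (fun x => -(q : ℝ) * ((algebraMap ℚ ℝ ∘ v) ⬝ᵥ x) ^ 2) ∈ rationalQuadraticFunctionals V := by
  refine ⟨q • vecMulVec v v, 0, .smul (transpose_vecMulVec v v) q, ?_⟩
  have hmap : (q • vecMulVec v v).map (algebraMap ℚ ℝ) =
      (q : ℝ) • vecMulVec (algebraMap ℚ ℝ ∘ v) (algebraMap ℚ ℝ ∘ v) := by
    ext i j
    simp [vecMulVec_apply]
  ext x
  rw [hmap, quadraticFunctional, smul_mulVec, vecMulVec_mulVec, dotProduct_smul, dotProduct_smul,
    dotProduct_comm x, Pi.comp_zero, map_zero, Function.const_zero, zero_dotProduct]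
  simp only [smul_eq_mul, MulOpposite.smul_eq_mul_unop, MulOpposite.unop_op]
  ring

lemma neg_mul_sqDrop_mem_rationalQuadraticFunctionals (q : ℚ) (z : Sym2 V) :
    (fun x => -(q : ℝ) * sqDrop x z) ∈ rationalQuadraticFunctionals V := by
  classical
  induction z with
  | h a b =>
    convert neg_mul_sq_dotProduct_mem_rationalQuadraticFunctionals q
      (Pi.single a 1 - Pi.single b 1) using 2 with x
    have hdiff : algebraMap ℚ ℝ ∘ (Pi.single a 1 - Pi.single b 1) =
        Pi.single a 1 - Pi.single b 1 := by
      ext i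
      simp only [Function.comp_apply, Pi.sub_apply, Pi.single_apply, map_sub, apply_ite
        (algebraMap ℚ ℝ), map_one, map_zero]
    rw [hdiff, sub_dotProduct, single_one_dotProduct, single_one_dotProduct, sqDrop_mk]

lemma sum_sub_mem_rationalQuadraticFunctionals (b d : V → ℤ) :
    (fun x : V → ℝ => ∑ v, (2 * b v * x v - d v * x v ^ 2)) ∈ rationalQuadraticFunctionals V := by
  classical
  refine ⟨diagonal fun v => (d v : ℚ), fun v => b v, isSymm_diagonal _, ?_⟩
  ext x
  rw [quadraticFunctional, diagonal_map (map_zero _), dotProduct, dotProduct, Finset.mul_sum,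
    ← Finset.sum_sub_distrib]
  refine Finset.sum_congr rfl fun v _ => ?_
  simp only [Function.comp_apply, map_intCast, mulVec_diagonal]
  ring

open scoped Pointwise

/-- The negatives of the energies of networks consisting of a single wire. -/
def negWireEnergies (V : Type*) : Set ((V → ℝ) → ℝ) :=
  range fun (e : Sym2 V × ℕ+) x => -((e.2 : ℕ) : ℝ)⁻¹ * sqDrop x e.1

lemma hasMonotoneLimitsIn_negWireEnergies :
    HasMonotoneLimitsIn (negWireEnergies V) (rationalQuadraticFunctionals V) := by
  have hwire (z : Sym2 V) : HasMonotoneLimitsIn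
      ((fun (t : ℝ) (x : V → ℝ) => t * sqDrop x z) '' range fun ℓ : ℕ+ => -((ℓ : ℕ) : ℝ)⁻¹)
      (rationalQuadraticFunctionals V) := by
    refine hasMonotoneLimitsIn_neg_inv_pnat.image (fun s t hst x => ?_) (by fun_prop) ?_
    · exact mul_le_mul_of_nonneg_right hst (sqDrop_nonneg x z)
    · rintro _ ⟨q, rfl⟩
      simpa using neg_mul_sqDrop_mem_rationalQuadraticFunctionals (-q) z
  refine (HasMonotoneLimitsIn.iUnion hwire).mono ?_
  rintro _ ⟨⟨z, ℓ⟩, rfl⟩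
  exact mem_iUnion.2 ⟨z, _, mem_range_self ℓ, rfl⟩

lemma neg_energy_mem_card_nsmul {V : Type*} (L : Multiset (Sym2 V × ℕ+)) :
    -energy L ∈ Multiset.card L • negWireEnergies V := by
  induction L using Multiset.induction_on with
  | empty => simp [energy, Pi.zero_def, funext_iff]
  | cons e L ih =>
    rw [Multiset.card_cons, succ_nsmul']
    refine ⟨_, mem_range_self e, _, ih, ?_⟩
    ext x
    simp only [neg_mul, Pi.add_apply, Pi.neg_apply, energy_cons, neg_add_rev]
    ring

lemma ResistorNetwork.hasMonotoneLimitsIn_functional [DecidableEq V] (n : ℕ) :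
    HasMonotoneLimitsIn (functional '' {N : ResistorNetwork V | N.size ≤ n})
      (rationalQuadraticFunctionals V) := by
  have hlim (i : (V → Icc (-n : ℤ) n) × (V → Icc (-n : ℤ) n) × Fin (n + 1)) :
      HasMonotoneLimitsIn
        ({fun x : V → ℝ => ∑ v, (2 * (i.1 v : ℤ) * x v - (i.2.1 v : ℤ) * x v ^ 2)} +
          (i.2.2 : ℕ) • negWireEnergies V)
        (rationalQuadraticFunctionals V) :=
    (HasMonotoneLimitsIn.singleton (sum_sub_mem_rationalQuadraticFunctionals _ _)).add
      (hasMonotoneLimitsIn_negWireEnergies.nsmul _)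
  refine (HasMonotoneLimitsIn.iUnion hlim).mono ?_
  rintro _ ⟨N, hN : N.size ≤ n, rfl⟩
  rw [N.size_eq] at hN
  have hIcc (f : V → ℤ) (hf : ∑ v, (f v).natAbs ≤ n) (v : V) : f v ∈ Icc (-n : ℤ) n := by
    have hv := Finset.single_le_sum_of_canonicallyOrdered (f := fun v => (f v).natAbs)
      (Finset.mem_univ v)
    exact ⟨by lia, by lia⟩
  refine mem_iUnion.2 ⟨(fun v => ⟨N.source v, hIcc _ (by lia) v⟩,
    fun v => ⟨N.leak v, hIcc _ (by lia) v⟩, ⟨Multiset.card N.edges, by lia⟩),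
    _, rfl, _, neg_energy_mem_card_nsmul N.edges, ?_⟩
  ext x
  exact (sub_eq_add_neg _ _).symm

end LimitsOfFunctionals

lemma sum_map_finset_sum {ι α β : Type*} [AddCommMonoid β] (s : Finset ι) (L : ι → Multiset α)
    (f : α → β) : ((∑ i ∈ s, L i).map f).sum = ∑ i ∈ s, ((L i).map f).sum :=
  map_sum (Multiset.sumAddMonoidHom.comp (Multiset.mapAddMonoidHom f)) L s

section OffDiagonalNonneg

lemma sum_diag_mul_sq_le_dotProduct_mulVec {V R : Type*} [Fintype V] [CommRing R] [PartialOrder R]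
    [IsOrderedRing R] {A : Matrix V V R} (hA : ∀ i j, i ≠ j → 0 ≤ A i j) {x : V → R}
    (hx : 0 ≤ x) : ∑ i, A i i * x i ^ 2 ≤ x ⬝ᵥ (A *ᵥ x) := by
  classical
  refine Finset.sum_le_sum fun i _ => ?_
  rw [mulVec, dotProduct, Fintype.sum_eq_add_sum_compl i, mul_add, mul_left_comm, ← sq]
  refine le_add_of_nonneg_right (mul_nonneg (hx i) (Finset.sum_nonneg fun j hj => ?_))
  exact mul_nonneg (hA i j (by simpa [eq_comm] using hj)) (hx j)

lemma dotProduct_mulVec_eq_sum_sub_sum_Ioi {V R : Type*} [Fintype V] [LinearOrder V]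
    [LocallyFiniteOrderTop V] [LocallyFiniteOrderBot V] [CommRing R] {A : Matrix V V R}
    (hA : A.IsSymm) (x : V → R) :
    x ⬝ᵥ (A *ᵥ x) =
      ∑ i, (∑ j, A i j) * x i ^ 2 - ∑ i, ∑ j ∈ Finset.Ioi i, A i j * (x i - x j) ^ 2 := by
  have hoff : ∑ i, ∑ j ∈ Finset.Ioi i, A i j * (x i - x j) ^ 2 =
      ∑ i, ∑ j, A i j * x i * (x i - x j) :=
    calc _ = ∑ i, ∑ j ∈ Finset.Ioi i, (A i j * x i * (x i - x j) + A j i * x j * (x j - x i)) :=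
          Finset.sum_congr rfl fun i _ => Finset.sum_congr rfl fun j _ => by
            rw [hA.apply i j]
            ring
      _ = ∑ i, ∑ j ∈ {i}ᶜ, A i j * x i * (x i - x j) :=
          Finset.sum_sum_Ioi_add_eq_sum_sum_off_diag fun j i => A i j * x i * (x i - x j)
      _ = _ := Finset.sum_congr rfl fun i _ => by
          rw [Fintype.sum_eq_add_sum_compl i, sub_self, mul_zero, zero_add]
  rw [hoff, ← Finset.sum_sub_distrib, dotProduct]
  refine Finset.sum_congr rfl fun i _ => ?_
  rw [mulVec, dotProduct, Finset.mul_sum, Finset.sum_mul, ← Finset.sum_sub_distrib]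
  exact Finset.sum_congr rfl fun j _ => by ring

variable {V : Type*} [Fintype V]

section Valency

variable [DecidableEq V]

/-- The number of edges at `i`, counted with multiplicity, in the graph with adjacency matrix `A`;
the diagonal of `A` is ignored. -/
def valency (A : Matrix V V ℤ) (i : V) : ℤ := ∑ j ∈ {i}ᶜ, A i j

lemma valency_nonneg {A : Matrix V V ℤ} (hA : ∀ i j, i ≠ j → 0 ≤ A i j) (i : V) :
    0 ≤ valency A i :=
  Finset.sum_nonneg fun j hj => hA i j (by simpa [eq_comm] using hj)

lemma two_mul_card_le_sum_valency_add_two {A : Matrix V V ℤ} (hsymm : A.IsSymm)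
    (hA : ∀ i j, i ≠ j → 0 ≤ A i j)
    (hconn : (SimpleGraph.fromRel fun i j => 0 < A i j).Connected) :
    2 * (Fintype.card V : ℤ) ≤ ∑ i, valency A i + 2 := by
  classical
  set G := SimpleGraph.fromRel fun i j => 0 < A i j
  have hdegree (i : V) : (G.degree i : ℤ) ≤ valency A i := by
    rw [← SimpleGraph.card_neighborFinset_eq_degree, Finset.card_eq_sum_ones, Nat.cast_sum]
    refine (Finset.sum_le_sum (g := fun j => A i j) fun j hj => ?_).trans
      (Finset.sum_le_sum_of_subset_of_nonneg (fun j hj => ?_) fun j hj _ => hA i j ?_)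
    · rw [SimpleGraph.mem_neighborFinset, SimpleGraph.fromRel_adj, hsymm.apply i j] at hj
      lia
    · simpa [eq_comm] using ((G.mem_neighborFinset i j).1 hj).ne
    · simpa [eq_comm] using hj
  have hedges := hconn.card_vert_le_card_edgeSet_add_one
  rw [Nat.card_eq_fintype_card, Nat.card_eq_fintype_card, ← SimpleGraph.edgeFinset_card] at hedges
  have hhandshake : ∑ i, (G.degree i : ℤ) = 2 * (G.edgeFinset.card : ℤ) := by
    exact_mod_cast G.sum_degrees_eq_twice_card_edges
  have hsum := Finset.sum_le_sum fun i (_ : i ∈ Finset.univ) => hdegree i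
  lia

end Valency

variable [LinearOrder V] [LocallyFiniteOrderTop V]

namespace ResistorNetwork

/-- The network with `A i j` wires of length one between `i` and `j`, whose leaks are chosen such
that its functional is `x ↦ 2 b · x + x · A x`. -/
def ofMatrix (A : Matrix V V ℤ) (b : V → ℤ) : ResistorNetwork V where
  source := b
  leak i := -∑ j, A i j
  edges := ∑ i, ∑ j ∈ Finset.Ioi i, Multiset.replicate (A i j).toNat (s(i, j), 1)

lemma sum_map_edges_ofMatrix {β : Type*} [AddCommMonoid β] (A : Matrix V V ℤ) (b : V → ℤ)
    (f : Sym2 V × ℕ+ → β) :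
    ((ofMatrix A b).edges.map f).sum =
      ∑ i, ∑ j ∈ Finset.Ioi i, (A i j).toNat • f (s(i, j), 1) := by
  simp only [ofMatrix, sum_map_finset_sum, Multiset.map_replicate, Multiset.sum_replicate]

variable {A : Matrix V V ℤ} {b : V → ℤ}

lemma functional_ofMatrix [LocallyFiniteOrderBot V] (hsymm : A.IsSymm)
    (hA : ∀ i j, i ≠ j → 0 ≤ A i j) :
    (ofMatrix A b).functional =
      quadraticFunctional ((-A).map (Int.cast : ℤ → ℝ)) fun i => (b i : ℝ) := by
  have henergy (x : V → ℝ) : energy (ofMatrix A b).edges x =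
      ∑ i, ∑ j ∈ Finset.Ioi i, (A i j : ℝ) * (x i - x j) ^ 2 := by
    rw [energy, sum_map_edges_ofMatrix]
    refine Finset.sum_congr rfl fun i _ => Finset.sum_congr rfl fun j hj => ?_
    have htoNat : ((A i j).toNat : ℝ) = A i j := by
      exact_mod_cast Int.toNat_of_nonneg (hA i j (Finset.mem_Ioi.1 hj).ne)
    simp [sqDrop_mk, htoNat]
  ext x
  rw [functional, henergy, quadraticFunctional,
    dotProduct_mulVec_eq_sum_sub_sum_Ioi (hsymm.neg.map _), dotProduct, Finset.mul_sum]
  simp only [ofMatrix, Finset.sum_sub_distrib, map_apply, neg_apply, Int.cast_neg, Int.cast_sum,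
    Finset.sum_neg_distrib, neg_mul, mul_assoc]
  ring

lemma count_edgeEnds_ofMatrix [LocallyFiniteOrderBot V] (hsymm : A.IsSymm)
    (hA : ∀ i j, i ≠ j → 0 ≤ A i j) (v : V) :
    ((edgeEnds (ofMatrix A b).edges).count v : ℤ) = valency A v := by
  have hcount (i j : V) (hij : i ≠ j) :
      ((A i j).toNat * s(i, j).toMultiset.count v : ℤ) =
        (if v = i then A j i else 0) + if v = j then A i j else 0 := by
    rw [hsymm.apply i j, Int.toNat_of_nonneg (hA i j hij), toMultiset_mk, Multiset.insert_eq_cons,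
      Multiset.count_cons, Multiset.count_singleton]
    split_ifs <;> push_cast <;> ring
  rw [edgeEnds, Multiset.count_bind, sum_map_edges_ofMatrix]
  simp only [smul_eq_mul, Nat.cast_sum, Nat.cast_mul]
  calc _ = ∑ i, ∑ j ∈ Finset.Ioi i,
        ((if v = i then A j i else 0) + if v = j then A i j else 0) :=
        Finset.sum_congr rfl fun i _ => Finset.sum_congr rfl fun j hj =>
          hcount i j (Finset.mem_Ioi.1 hj).ne
    _ = ∑ i, ∑ j ∈ {i}ᶜ, if v = i then A j i else 0 :=
        Finset.sum_sum_Ioi_add_eq_sum_sum_off_diag fun j i => if v = i then A j i else 0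
    _ = valency A v := by
      simp [valency, hsymm.apply]

lemma leak_ofMatrix (A : Matrix V V ℤ) (b : V → ℤ) (i : V) :
    (ofMatrix A b).leak i = -A i i - valency A i := by
  have hleak : (ofMatrix A b).leak i = -∑ j, A i j := rfl
  rw [hleak, valency, Fintype.sum_eq_add_sum_compl i, neg_add']

lemma weight_ofMatrix [LocallyFiniteOrderBot V] (hsymm : A.IsSymm)
    (hA : ∀ i j, i ≠ j → 0 ≤ A i j) (i : V) :
    ((ofMatrix A b).weight i : ℤ) = |b i| + |-A i i - valency A i| + valency A i := by
  rw [weight, Nat.cast_add, Nat.cast_add, Int.natCast_natAbs, Int.natCast_natAbs, leak_ofMatrix,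
    count_edgeEnds_ofMatrix hsymm hA, ofMatrix]

end ResistorNetwork

end OffDiagonalNonneg

lemma le_mul_two_mul_mul_div_sub {K : Type*} [Field K] [LinearOrder K] [IsStrictOrderedRing K]
    {c d k : K} (hc : 0 ≤ c) (hd : 0 < d) (hdc : c ≠ 0 → d ≤ k * c) :
    c ≤ k * (2 * (c * (c / d)) - d * (c / d) ^ 2) := by
  have hsq : 2 * (c * (c / d)) - d * (c / d) ^ 2 = c ^ 2 / d := by
    field_simp
    ring
  rw [hsq, ← mul_div_assoc, le_div_iff₀ hd, sq, mul_comm, ← mul_assoc]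
  obtain rfl | hc0 := eq_or_ne c 0
  · simp
  · exact mul_le_mul_of_nonneg_right (hdc hc0) hc

namespace ResolutionDatum

variable {r : ℕ} (D : ResolutionDatum r)

/-- The vector `D.c` of intersection numbers `K · A_i`, as integers. -/
def canonicalDegree (i : Fin r) : ℤ := 2 * D.p i - 2 - D.M i i

/-- The positive definite real matrix `-M`. -/
def gram : Matrix (Fin r) (Fin r) ℝ := (-D.M).map Int.cast

/-- The network whose functional is `x ↦ 2 c · x + x · M x`. -/
def network : ResistorNetwork (Fin r) := .ofMatrix D.M D.canonicalDegree

lemma intCast_canonicalDegree (i : Fin r) : (D.canonicalDegree i : ℚ) = D.c i := by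
  simp [canonicalDegree, c]

lemma isSymm_gram : D.gram.IsSymm := D.symm.neg.map _

lemma functional_network : D.network.functional =
    quadraticFunctional D.gram fun i => (D.canonicalDegree i : ℝ) :=
  ResistorNetwork.functional_ofMatrix D.symm D.offdiag_nonneg

lemma gram_mulVec (x : Fin r → ℝ) :
    D.gram *ᵥ x = -(D.M.map (Int.cast : ℤ → ℝ) *ᵥ x) := by
  rw [gram, Matrix.map_neg _ Int.cast_neg, neg_mulVec]

lemma dotProduct_gram_mulVec_nonneg (x : Fin r → ℝ) : 0 ≤ x ⬝ᵥ (D.gram *ᵥ x) := by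
  rw [gram_mulVec, dotProduct_neg, neg_nonneg]
  obtain rfl | hx := eq_or_ne x 0
  · rw [zero_dotProduct]
  · exact (D.negdef x hx).le

lemma det_ne_zero : D.M.det ≠ 0 := fun hdet => by
  obtain ⟨v, hv, hMv⟩ := exists_mulVec_eq_zero_iff.2 hdet
  have hMv' : D.M.map (Int.cast : ℤ → ℝ) *ᵥ (Int.cast ∘ v) = 0 := by
    refine (map_mulVec_comp (Int.castRingHom ℝ) D.M v).trans ?_
    rw [hMv, Pi.comp_zero, map_zero, Function.const_zero]
  refine (D.negdef (Int.cast ∘ v) fun h => hv ?_).ne (by rw [hMv', dotProduct_zero])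
  ext i
  exact Int.cast_eq_zero.1 (congrFun h i)

lemma isLUB_range_functional_network : IsLUB (range D.network.functional) (D.negK2 : ℝ) := by
  let A : Matrix (Fin r) (Fin r) ℚ := D.M.map Int.cast
  have hdet : IsUnit A.det := by
    rw [← Int.cast_det]
    exact (Int.cast_ne_zero.2 D.det_ne_zero).isUnit
  have hz : (-A) *ᵥ (-(A⁻¹ *ᵥ D.c)) = D.c := by
    rw [neg_mulVec_neg, mulVec_mulVec, mul_nonsing_inv _ hdet, one_mulVec]
  have hA : D.gram = (-A).map (Rat.castHom ℝ) := by
    ext i j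
    simp [gram, A]
  have hc : (fun i => (D.canonicalDegree i : ℝ)) = Rat.castHom ℝ ∘ D.c := by
    ext i
    simp [← intCast_canonicalDegree]
  have hz' : D.gram *ᵥ (Rat.castHom ℝ ∘ (-(A⁻¹ *ᵥ D.c))) =
      Rat.castHom ℝ ∘ D.c := by
    rw [hA, map_mulVec_comp, hz]
  have hnegK2 : (D.negK2 : ℝ) =
      (Rat.castHom ℝ ∘ D.c) ⬝ᵥ (Rat.castHom ℝ ∘ (-(A⁻¹ *ᵥ D.c))) := by
    rw [← RingHom.map_dotProduct, dotProduct_neg]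
    rfl
  rw [functional_network, hc, hnegK2]
  exact (isGreatest_range_quadraticFunctional D.isSymm_gram D.dotProduct_gram_mulVec_nonneg
    hz').isLUB

lemma diag_neg (i : Fin r) : D.M i i < 0 := by
  have hform := D.negdef (Pi.single i 1) (by simp)
  simpa using hform

lemma canonicalDegree_nonneg (i : Fin r) : 0 ≤ D.canonicalDegree i := by
  have hdiag := D.diag_neg i
  have hdiag_le := D.diag_le_neg_two i
  unfold canonicalDegree
  lia

lemma neg_diag_le_canonicalDegree_add_two (i : Fin r) : -D.M i i ≤ D.canonicalDegree i + 2 := by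
  unfold canonicalDegree
  lia

lemma neg_diag_le_three_mul_canonicalDegree {i : Fin r} (hi : D.canonicalDegree i ≠ 0) :
    -D.M i i ≤ 3 * D.canonicalDegree i := by
  have hnonneg := D.canonicalDegree_nonneg i
  have hle := D.neg_diag_le_canonicalDegree_add_two i
  lia

lemma neg_diag_eq_two {i : Fin r} (hi : D.canonicalDegree i = 0) : -D.M i i = 2 := by
  have hdiag := D.diag_neg i
  unfold canonicalDegree at hi
  lia

lemma gram_mulVec_one : D.gram *ᵥ 1 = fun i => (D.network.leak i : ℝ) := by
  ext i
  simp [gram, network, ResistorNetwork.ofMatrix, mulVec, dotProduct]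

lemma dotProduct_gram_mulVec_le {x : Fin r → ℝ} (hx : 0 ≤ x) :
    x ⬝ᵥ (D.gram *ᵥ x) ≤ ∑ i, ((-D.M i i : ℤ) : ℝ) * x i ^ 2 := by
  have hle := sum_diag_mul_sq_le_dotProduct_mulVec (A := D.M.map (Int.cast : ℤ → ℝ))
    (fun i j hij => Int.cast_nonneg (D.offdiag_nonneg i j hij)) hx
  rw [gram_mulVec, dotProduct_neg]
  simpa using hle

/-- Test `D.network.functional` on `i ↦ c i / (-M i i)`. -/
lemma sum_canonicalDegree_le :
    ((∑ i, D.canonicalDegree i : ℤ) : ℝ) ≤ 3 * (D.negK2 : ℝ) := by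
  let d (i : Fin r) : ℝ := (-D.M i i : ℤ)
  let x (i : Fin r) : ℝ := D.canonicalDegree i / d i
  have hd (i : Fin r) : 0 < d i := Int.cast_pos.2 (neg_pos.2 (D.diag_neg i))
  have hc (i : Fin r) : (0 : ℝ) ≤ D.canonicalDegree i :=
    Int.cast_nonneg (D.canonicalDegree_nonneg i)
  have hx : 0 ≤ x := fun i => div_nonneg (hc i) (hd i).le
  have hterm (i : Fin r) : (D.canonicalDegree i : ℝ) ≤
      3 * (2 * (D.canonicalDegree i * x i) - d i * x i ^ 2) :=
    le_mul_two_mul_mul_div_sub (hc i) (hd i) fun hi => by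
      simp only [d]
      exact_mod_cast D.neg_diag_le_three_mul_canonicalDegree (Int.cast_ne_zero.1 hi)
  have hfunctional := D.isLUB_range_functional_network.1 (mem_range_self x)
  rw [functional_network, quadraticFunctional] at hfunctional
  have hgram := D.dotProduct_gram_mulVec_le hx
  calc ((∑ i, D.canonicalDegree i : ℤ) : ℝ)
      ≤ ∑ i, 3 * (2 * (D.canonicalDegree i * x i) - d i * x i ^ 2) := by
        rw [Int.cast_sum]
        exact Finset.sum_le_sum fun i _ => hterm i
    _ = 3 * (2 * ((fun i => (D.canonicalDegree i : ℝ)) ⬝ᵥ x) - ∑ i, d i * x i ^ 2) := by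
        rw [← Finset.mul_sum, Finset.sum_sub_distrib, ← Finset.mul_sum, dotProduct]
    _ ≤ 3 * (D.negK2 : ℝ) := by linarith

lemma sum_leak_le : ∑ i, D.network.leak i ≤ ∑ i, D.canonicalDegree i + 2 := by
  have hvalency := two_mul_card_le_sum_valency_add_two D.symm D.offdiag_nonneg D.connected
  have hdiag := Finset.sum_le_sum fun i (_ : i ∈ Finset.univ) =>
    D.neg_diag_le_canonicalDegree_add_two i
  simp only [network, ResistorNetwork.leak_ofMatrix, Finset.sum_sub_distrib]
  simp only [Finset.sum_add_distrib, Finset.sum_const, Finset.card_univ, Fintype.card_fin,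
    nsmul_eq_mul] at hvalency hdiag
  lia

/-- The vertices of genus zero and self-intersection `-2` with at most one neighbor. -/
def leaves : Finset (Fin r) := {i | D.canonicalDegree i = 0 ∧ valency D.M i ≤ 1}

lemma mem_leaves {i : Fin r} : i ∈ D.leaves ↔ D.canonicalDegree i = 0 ∧ valency D.M i ≤ 1 := by
  simp [leaves]

/-- Test the positive definite form `-M` on `2 - χ`, where `χ` is the indicator of `D.leaves`. -/
lemma card_leaves_le : (D.leaves.card : ℤ) ≤ 2 * ∑ i, D.network.leak i := by
  let u : Fin r → ℝ := fun i => if i ∈ D.leaves then 1 else 0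
  have hu (f : Fin r → ℝ) : u ⬝ᵥ f = ∑ i ∈ D.leaves, f i := by
    simp [u, dotProduct]
  have hdiag : u ⬝ᵥ (D.gram *ᵥ u) ≤ 2 * D.leaves.card := by
    have hle := D.dotProduct_gram_mulVec_le (x := u) fun i => by
      simp only [u, Pi.zero_apply]
      positivity
    refine hle.trans_eq ?_
    rw [mul_comm, ← nsmul_eq_mul, ← Finset.sum_const, ← hu, dotProduct]
    refine Finset.sum_congr rfl fun i _ => ?_
    by_cases hi : i ∈ D.leaves
    · rw [D.neg_diag_eq_two (D.mem_leaves.1 hi).1]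
      simp [u, hi]
    · simp [u, hi]
  have hleak : (D.leaves.card : ℝ) ≤ u ⬝ᵥ (D.gram *ᵥ 1) := by
    rw [hu, gram_mulVec_one, Finset.card_eq_sum_ones, Nat.cast_sum]
    refine Finset.sum_le_sum fun i hi => ?_
    obtain ⟨hc, hvalency⟩ := D.mem_leaves.1 hi
    have hle : 1 ≤ D.network.leak i := by
      rw [network, ResistorNetwork.leak_ofMatrix, D.neg_diag_eq_two hc]
      lia
    exact_mod_cast hle
  have hform := D.dotProduct_gram_mulVec_nonneg ((2 : ℝ) • 1 - u)
  have hcross : 1 ⬝ᵥ (D.gram *ᵥ u) = u ⬝ᵥ (D.gram *ᵥ 1) := by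
    rw [dotProduct_mulVec, ← mulVec_transpose, D.isSymm_gram.eq, dotProduct_comm]
  have hone : 1 ⬝ᵥ (D.gram *ᵥ 1) = ∑ i, (D.network.leak i : ℝ) := by
    rw [gram_mulVec_one, one_dotProduct]
  simp only [mulVec_sub, mulVec_smul, dotProduct_sub, sub_dotProduct, dotProduct_smul,
    smul_dotProduct, smul_eq_mul, hcross, hone] at hform
  have hcard : (D.leaves.card : ℝ) ≤ 2 * ∑ i, (D.network.leak i : ℝ) := by
    linarith
  exact_mod_cast hcard

lemma isSeriesVertex_network_iff {i : Fin r} :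
    D.network.IsSeriesVertex i ↔ D.canonicalDegree i = 0 ∧ valency D.M i = 2 := by
  have hsource : D.network.source i = D.canonicalDegree i := rfl
  have hleak := ResistorNetwork.leak_ofMatrix D.M D.canonicalDegree i
  have hcount := ResistorNetwork.count_edgeEnds_ofMatrix (b := D.canonicalDegree) D.symm
    D.offdiag_nonneg i
  have hdiag := D.neg_diag_eq_two (i := i)
  rw [ResistorNetwork.IsSeriesVertex, hsource, network]
  lia

lemma coreSize_network_le : (D.network.coreSize : ℤ) ≤ 32 * ∑ i, D.canonicalDegree i + 32 := by
  -- At a vertex with `c i = 0` and valency `v` the leak is `2 - v`, and for `v ≠ 2` this says that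
  -- `|2 - v| + v ≤ 4 (v - 2) + 10 [v ≤ 1]`.
  have hterm (i : Fin r) : (if ¬ D.network.IsSeriesVertex i then (D.network.weight i : ℤ) else 0) ≤
      -4 * D.network.leak i + 16 * D.canonicalDegree i + if i ∈ D.leaves then 10 else 0 := by
    have hdiag := D.neg_diag_eq_two (i := i)
    have hdiag_le := D.neg_diag_le_three_mul_canonicalDegree (i := i)
    have hc := D.canonicalDegree_nonneg i
    have hvalency := valency_nonneg D.offdiag_nonneg i
    simp only [D.isSeriesVertex_network_iff, D.mem_leaves]
    simp only [network, ResistorNetwork.leak_ofMatrix,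
      ResistorNetwork.weight_ofMatrix D.symm D.offdiag_nonneg, abs_of_nonneg hc]
    rcases abs_cases (-D.M i i - valency D.M i) with habs | habs <;> split_ifs <;> lia
  have hleaves : ∑ i, (if i ∈ D.leaves then (10 : ℤ) else 0) = 10 * D.leaves.card := by
    simp [mul_comm]
  calc (D.network.coreSize : ℤ)
      ≤ ∑ i, (-4 * D.network.leak i + 16 * D.canonicalDegree i +
          if i ∈ D.leaves then 10 else 0) := by
        rw [ResistorNetwork.coreSize, Finset.sum_filter, Nat.cast_sum]
        push_cast
        exact Finset.sum_le_sum fun i _ => hterm i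
    _ = -4 * ∑ i, D.network.leak i + 16 * ∑ i, D.canonicalDegree i + 10 * D.leaves.card := by
        rw [Finset.sum_add_distrib, Finset.sum_add_distrib, ← Finset.mul_sum, ← Finset.mul_sum,
          hleaves]
    _ ≤ 32 * ∑ i, D.canonicalDegree i + 32 := by
        have hleaves_le := D.card_leaves_le
        have hleak := D.sum_leak_le
        lia

lemma exists_network_of_negK2_le {n : ℕ} (hn : (D.negK2 : ℝ) ≤ n) :
    ∃ N : ResistorNetwork (Fin (96 * n + 32)), N.size ≤ 96 * n + 32 ∧
      IsLUB (range N.functional) (D.negK2 : ℝ) := by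
  obtain ⟨N, hsize, hbounds⟩ := D.network.exists_size_eq_coreSize
  have hsum : ∑ i, D.canonicalDegree i ≤ 3 * n := by
    exact_mod_cast D.sum_canonicalDegree_le.trans (mul_le_mul_of_nonneg_left hn zero_le_three)
  have hN : N.size ≤ 96 * n + 32 := by
    have hcore := D.coreSize_network_le
    lia
  obtain ⟨N', hsize', hrange⟩ := ResistorNetwork.exists_of_size_le_card
    (W := Fin (96 * n + 32)) (hN.trans_eq (Fintype.card_fin _).symm)
  refine ⟨N', hsize'.trans hN, ?_⟩
  rw [hrange, isLUB_congr hbounds]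
  exact D.isLUB_range_functional_network

end ResolutionDatum

theorem negK2Set_accumulation_from_below_rational_general {α : ℝ} (hα : α ∈ closure negK2Set) :
    ∃ q : ℚ, α = (q : ℝ) := by
  obtain ⟨s, hs, hlim⟩ := mem_closure_iff_seq_limit.1 hα
  obtain ⟨C, hC⟩ := hlim.bddAbove_range
  obtain ⟨n, hn⟩ := exists_nat_ge C
  have hnetwork (m : ℕ) : ∃ N : ResistorNetwork (Fin (96 * n + 32)),
      N.size ≤ 96 * n + 32 ∧ IsLUB (range N.functional) (s m) := by
    obtain ⟨r, -, D, hD⟩ := hs m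
    rw [hD]
    exact D.exists_network_of_negK2_le (hD ▸ (hC (mem_range_self m)).trans hn)
  choose N hsize hN using hnetwork
  obtain ⟨g, hg, hmono, F, hF, htendsto⟩ :=
    ResistorNetwork.hasMonotoneLimitsIn_functional (96 * n + 32) (fun m => (N m).functional)
      fun m => ⟨N m, hsize m, rfl⟩
  exact exists_rat_of_isLUB_range hF <|
    isLUB_range_of_tendsto hmono htendsto (fun m => hN (g m)) (hlim.comp hg.tendsto_atTop)

/-- **Theorem 2.3.** Every accumulation point from below of the set of values `-K²` of normal
surface singularities is rational. -/
theorem negK2Set_accumulation_from_below_rational (α : ℝ)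
    (hα : ∀ ε : ℝ, 0 < ε → ∃ s ∈ negK2Set, α - ε < s ∧ s < α) :
    ∃ q : ℚ, α = (q : ℝ) :=
  negK2Set_accumulation_from_below_rational_general <| Metric.mem_closure_iff.2 fun ε hε =>
    let ⟨s, hs, hlt, hsα⟩ := hα ε hε
    ⟨s, hs, abs_lt.2 ⟨by linarith, by linarith⟩⟩
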